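/- arXiv:1307.3685 — 3 statements merged into one kernel-verified Lean document; each statement's English description precedes it below -/
import Mathlib

section
/- Let H₁ and H₂ be complex Hilbert spaces, let T : H₁ → H₂ be a closed, densely defined linear operator with von Neumann adjoint T*, and let C > 0 be a constant. Then the estimate ‖u‖ ≤ C‖Tu‖ holds for every u ∈ Dom T lying in the closure of Range T* if and only if the estimate ‖v‖ ≤ C‖T*v‖ holds for every v ∈ Dom T* lying in the closure of Range T. In particular, the best constants in the two estimates coincide. -/
/-!
Since `⟪v, T u⟫ = ⟪T* v, u⟫`, a lower bound for `T` at `u` bounds `⟪v, T u⟫` by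
`C ‖T* v‖ ‖T u‖`, and for `v` in the closure of `Range T` this yields `‖v‖ ≤ C ‖T* v‖`. The lower
bound is only available for `u` in the closure of `Range T*`, but projecting `u` onto that closure
changes `u` by an element of `(Range T*)ᗮ = Ker T**`, hence does not change `T u` because
`T** = T`. The converse exchanges the roles of `T` and `T*`.
-/

section

variable {𝕜 E F : Type*} [RCLike 𝕜]
variable [NormedAddCommGroup E] [InnerProductSpace 𝕜 E]
variable [NormedAddCommGroup F] [InnerProductSpace 𝕜 F]

/-- A subspace of `E × F`, regarded as a subspace of the Hilbert sum `WithLp 2 (E × F)`, where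
orthogonal complements are available (`E × F` itself carries the sup norm). -/
def l2Submodule (g : Submodule 𝕜 (E × F)) : Submodule 𝕜 (WithLp 2 (E × F)) :=
  g.comap (WithLp.linearEquiv 2 𝕜 (E × F)).toLinearMap

theorem toLp_mem_l2Submodule {g : Submodule 𝕜 (E × F)} {p : E × F} :
    WithLp.toLp 2 p ∈ l2Submodule g ↔ p ∈ g :=
  Iff.rfl

theorem l2Submodule_topologicalClosure (g : Submodule 𝕜 (E × F)) :
    l2Submodule g.topologicalClosure = (l2Submodule g).topologicalClosure :=
  SetLike.coe_injective ((WithLp.prodContinuousLinearEquiv 2 𝕜 E F).preimage_closure g)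

theorem toLp_mem_orthogonal_l2Submodule {g : Submodule 𝕜 (E × F)} {x : E} {y : F} :
    WithLp.toLp 2 (x, y) ∈ (l2Submodule g)ᗮ ↔ (y, -x) ∈ g.adjoint := by
  have hforall : (∀ w ∈ l2Submodule g, inner 𝕜 w (WithLp.toLp 2 (x, y)) = 0) ↔
      ∀ a b, (a, b) ∈ g → inner 𝕜 a x + inner 𝕜 b y = 0 :=
    ⟨fun h a b hab => h (WithLp.toLp 2 (a, b)) hab, fun h w hw => h w.fst w.snd hw⟩
  simp only [Submodule.mem_orthogonal, hforall, Submodule.mem_adjoint_iff, inner_neg_right,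
    sub_neg_eq_add, add_comm]

theorem mem_adjoint_adjoint_iff {g : Submodule 𝕜 (E × F)} {p : E × F} :
    p ∈ g.adjoint.adjoint ↔ WithLp.toLp 2 p ∈ (l2Submodule g)ᗮᗮ := by
  rw [Submodule.mem_adjoint_iff, Submodule.mem_orthogonal]
  constructor
  · intro h w hw
    have hw_adjoint : (w.snd, -w.fst) ∈ g.adjoint := toLp_mem_orthogonal_l2Submodule.1 hw
    have hinner : inner 𝕜 (-w.fst) p.1 - inner 𝕜 w.snd p.2 = 0 := h _ _ hw_adjoint
    change inner 𝕜 w.fst p.1 + inner 𝕜 w.snd p.2 = 0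
    rw [inner_neg_left] at hinner
    linear_combination -hinner
  · intro h b a hba
    have hba_orthogonal : WithLp.toLp 2 (-a, b) ∈ (l2Submodule g)ᗮ :=
      toLp_mem_orthogonal_l2Submodule.2 (by rwa [neg_neg])
    have hinner : inner 𝕜 (-a) p.1 + inner 𝕜 b p.2 = 0 := h _ hba_orthogonal
    rw [inner_neg_left] at hinner
    linear_combination -hinner

theorem adjoint_adjoint_eq_topologicalClosure [CompleteSpace E] [CompleteSpace F]
    (g : Submodule 𝕜 (E × F)) : g.adjoint.adjoint = g.topologicalClosure := by
  ext p
  rw [mem_adjoint_adjoint_iff, Submodule.orthogonal_orthogonal_eq_closure,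
    ← l2Submodule_topologicalClosure, toLp_mem_l2Submodule]

theorem mem_orthogonal_range_iff_mem_adjoint_graph {T : E →ₗ.[𝕜] F} {y : F} :
    y ∈ (LinearMap.range T.toFun)ᗮ ↔ (y, 0) ∈ T.graph.adjoint := by
  have hrange : y ∈ (LinearMap.range T.toFun)ᗮ ↔ ∀ u, inner 𝕜 (T u) y = 0 := by
    rw [Submodule.mem_orthogonal]
    exact Set.forall_mem_range
  simp [hrange, Submodule.mem_adjoint_iff]

theorem mem_orthogonal_range_iff_mem_graph_adjoint [CompleteSpace E] {T : E →ₗ.[𝕜] F}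
    (hT : Dense (T.domain : Set E)) {y : F} :
    y ∈ (LinearMap.range T.toFun)ᗮ ↔ (y, 0) ∈ T.adjoint.graph := by
  rw [mem_orthogonal_range_iff_mem_adjoint_graph, T.adjoint_graph_eq_graph_adjoint hT]

theorem mem_orthogonal_range_adjoint_iff_mem_graph [CompleteSpace E] [CompleteSpace F]
    {T : E →ₗ.[𝕜] F} (hT : Dense (T.domain : Set E)) (hT' : T.IsClosed) {x : E} :
    x ∈ (LinearMap.range T.adjoint.toFun)ᗮ ↔ (x, 0) ∈ T.graph := by
  rw [mem_orthogonal_range_iff_mem_adjoint_graph, T.adjoint_graph_eq_graph_adjoint hT,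
    adjoint_adjoint_eq_topologicalClosure, hT'.submodule_topologicalClosure_eq]

theorem norm_le_of_mem_closure_of_norm_inner_le {s : Set E} {v : E} {M : ℝ} (hv : v ∈ closure s)
    (hv₀ : v ≠ 0) (h : ∀ w ∈ s, ‖inner 𝕜 v w‖ ≤ M * ‖w‖) : ‖v‖ ≤ M := by
  have hvv : ‖inner 𝕜 v v‖ ≤ M * ‖v‖ := le_on_closure h (by fun_prop) (by fun_prop) hv
  rw [← inner_self_re_eq_norm, inner_self_eq_norm_mul_norm] at hvv
  exact le_of_mul_le_mul_right hvv (norm_pos_iff.2 hv₀)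

theorem exists_mem_and_apply_eq_of_orthogonal_le_ker {T : E →ₗ.[𝕜] F} {K : Submodule 𝕜 E}
    [K.HasOrthogonalProjection] (hK : ∀ k ∈ Kᗮ, (k, 0) ∈ T.graph) (u : T.domain) :
    ∃ u' : T.domain, (u' : E) ∈ K ∧ T u' = T u := by
  obtain ⟨y, hy, z, hz, hyz⟩ := K.exists_add_mem_mem_orthogonal (u : E)
  have hyT : (y, T u) ∈ T.graph := by
    simpa [hyz] using T.graph.sub_mem (T.mem_graph u) (hK z hz)
  obtain ⟨u', rfl, hu'⟩ := T.mem_graph_iff.1 hyT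
  exact ⟨u', hy, hu'⟩

theorem estimate_of_isFormalAdjoint [CompleteSpace E] {T : E →ₗ.[𝕜] F} {S : F →ₗ.[𝕜] E} {C : ℝ}
    (hST : S.IsFormalAdjoint T) (hker : ∀ k ∈ (LinearMap.range S.toFun)ᗮ, (k, 0) ∈ T.graph)
    (hT : ∀ u : T.domain, (u : E) ∈ closure (LinearMap.range S.toFun : Set E) →
      ‖(u : E)‖ ≤ C * ‖T u‖)
    (v : S.domain) (hv : (v : F) ∈ closure (LinearMap.range T.toFun : Set F)) :
    ‖(v : F)‖ ≤ C * ‖S v‖ := by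
  obtain rfl | hv₀ := eq_or_ne v 0
  · simp
  refine norm_le_of_mem_closure_of_norm_inner_le (𝕜 := 𝕜) hv (by simpa using hv₀) ?_
  rintro _ ⟨u, rfl⟩
  obtain ⟨u', hu', hTu⟩ : ∃ u' : T.domain,
      (u' : E) ∈ (LinearMap.range S.toFun).topologicalClosure ∧ T u' = T u :=
    exists_mem_and_apply_eq_of_orthogonal_le_ker (by rwa [Submodule.orthogonal_closure]) u
  calc ‖inner 𝕜 (v : F) (T u)‖ = ‖inner 𝕜 (S v) (u' : E)‖ := by rw [hST v u', hTu]
    _ ≤ ‖S v‖ * ‖(u' : E)‖ := norm_inner_le_norm _ _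
    _ ≤ ‖S v‖ * (C * ‖T u'‖) := by gcongr; exact hT u' hu'
    _ = C * ‖S v‖ * ‖T u‖ := by rw [hTu]; ring

theorem estimate_iff_estimate_adjoint_general [CompleteSpace E] [CompleteSpace F]
    {T : E →ₗ.[𝕜] F} (hT_dense : Dense (T.domain : Set E)) (hT_closed : T.IsClosed) (C : ℝ) :
    (∀ u : T.domain, (u : E) ∈ closure (LinearMap.range T.adjoint.toFun : Set E) →
        ‖(u : E)‖ ≤ C * ‖T u‖) ↔
      (∀ v : T.adjoint.domain, (v : F) ∈ closure (LinearMap.range T.toFun : Set F) →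
        ‖(v : F)‖ ≤ C * ‖T.adjoint v‖) := by
  have hadj : T.adjoint.IsFormalAdjoint T := T.adjoint_isFormalAdjoint hT_dense
  constructor
  · exact estimate_of_isFormalAdjoint hadj
      fun _ => (mem_orthogonal_range_adjoint_iff_mem_graph hT_dense hT_closed).1
  · exact estimate_of_isFormalAdjoint hadj.symm
      fun _ => (mem_orthogonal_range_iff_mem_graph_adjoint hT_dense).1

end

/-- Hörmander's lemma, (3) ⟺ (4) with the same constant: for a closed densely defined operator
`T` between complex Hilbert spaces and `C > 0`, the estimate `‖u‖ ≤ C‖Tu‖` for all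
`u ∈ Dom T ∩ closure (Range T*)` holds iff the estimate `‖v‖ ≤ C‖T*v‖` holds for all
`v ∈ Dom T* ∩ closure (Range T)`. -/
theorem estimate_iff_estimate_adjoint
    {H₁ H₂ : Type*} [NormedAddCommGroup H₁] [InnerProductSpace ℂ H₁] [CompleteSpace H₁]
    [NormedAddCommGroup H₂] [InnerProductSpace ℂ H₂] [CompleteSpace H₂]
    (T : H₁ →ₗ.[ℂ] H₂) (hT_dense : Dense (T.domain : Set H₁)) (hT_closed : T.IsClosed)
    (C : ℝ) (hC : 0 < C) :
    (∀ u : T.domain,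
        (u : H₁) ∈ closure ((LinearMap.range T.adjoint.toFun : Submodule ℂ H₁) : Set H₁) →
          ‖(u : H₁)‖ ≤ C * ‖T u‖) ↔
      (∀ v : T.adjoint.domain,
        (v : H₂) ∈ closure ((LinearMap.range T.toFun : Submodule ℂ H₂) : Set H₂) →
          ‖(v : H₂)‖ ≤ C * ‖T.adjoint v‖) :=
  estimate_iff_estimate_adjoint_general hT_dense hT_closed C
end

section
/- Let H₁, H₂, H₃ be complex Hilbert spaces, let T : H₁ → H₂ and S : H₂ → H₃ be closed, densely defined linear operators with Range T ⊆ Ker S, and set H := Ker S ∩ Ker T*. Then Range T and Range S* are both closed if and only if there exists a constant C > 0 such that ‖u‖² ≤ C²(‖Su‖² + ‖T*u‖²) for every u ∈ Dom S ∩ Dom T* that is orthogonal to H. -/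
/-!
A closed operator `A` between Hilbert spaces has closed range iff it is bounded below on `(Ker A)ᗮ`.
Together with `A†† = A` and `Ker A† = (Range A)ᗮ` this gives the closed range theorem: `Range A` is
closed iff `Range A†` is. Hence `Range T` and `Range S†` are both closed iff `T†` and `S` are
bounded below off their kernels. Since `(Ker T†)ᗮ ≤ Ker S`, the projection of
`u ∈ (Ker S ⊓ Ker T†)ᗮ` to `Ker T†` lies in `(Ker S)ᗮ` and has the same image under `S` as `u`,
while the complementary part has the same image under `T†` as `u`; by Pythagoras the two lower
bounds add up to the joint estimate.
-/

open scoped LinearPMap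

section Kernel

variable {R E F : Type*} [AddCommGroup E] [AddCommGroup F]

/-- The kernel of a partially defined linear map, as a submodule of the ambient space rather than
of the domain. -/
def pmapKer [Ring R] [Module R E] [Module R F] (A : E →ₗ.[R] F) : Submodule R E :=
  (LinearMap.ker A.toFun).map A.domain.subtype

theorem mem_pmapKer [Ring R] [Module R E] [Module R F] {A : E →ₗ.[R] F} {x : E} :
    x ∈ pmapKer A ↔ ∃ hx : x ∈ A.domain, A ⟨x, hx⟩ = 0 := by
  simp [pmapKer]

theorem exists_apply_eq_of_sub_mem_pmapKer [Ring R] [Module R E] [Module R F] {A : E →ₗ.[R] F}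
    (x : A.domain) {y : E} (h : (x : E) - y ∈ pmapKer A) :
    ∃ hy : y ∈ A.domain, A ⟨y, hy⟩ = A x := by
  obtain ⟨hdom, hzero⟩ := mem_pmapKer.1 h
  have hy : y ∈ A.domain := by simpa using sub_mem x.2 hdom
  exact ⟨hy, (sub_eq_zero.1 ((A.map_sub x ⟨y, hy⟩).symm.trans hzero)).symm⟩

theorem isClosed_pmapKer [CommRing R] [Module R E] [Module R F] [TopologicalSpace E]
    [TopologicalSpace F] {A : E →ₗ.[R] F} (hA : A.IsClosed) : IsClosed (pmapKer A : Set E) := by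
  have hpre : (pmapKer A : Set E) = (fun x ↦ (x, (0 : F))) ⁻¹' A.graph := by
    ext x
    simp [mem_pmapKer]
  rw [hpre]
  exact IsClosed.preimage (by fun_prop) hA

end Kernel

theorem exists_apply_eq_norm_le_of_isClosed_range {𝕜 E F : Type*} [NontriviallyNormedField 𝕜]
    [NormedAddCommGroup E] [NormedSpace 𝕜 E] [CompleteSpace E]
    [NormedAddCommGroup F] [NormedSpace 𝕜 F] [CompleteSpace F] {A : E →ₗ.[𝕜] F}
    (hA : A.IsClosed) (hr : IsClosed (A.toFun.range : Set F)) :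
    ∃ C : ℝ, 0 < C ∧ ∀ x : A.domain, ∃ x' : A.domain, A x' = A x ∧ ‖(x' : E)‖ ≤ C * ‖A x‖ := by
  have : CompleteSpace A.graph := (show IsClosed (A.graph : Set (E × F)) from hA).completeSpace_coe
  have : CompleteSpace A.toFun.range := hr.completeSpace_coe
  let π : A.graph →L[𝕜] A.toFun.range :=
    ((ContinuousLinearMap.snd 𝕜 E F).comp A.graph.subtypeL).codRestrict _ fun p ↦
      let ⟨x, _, hx⟩ := A.mem_graph_iff.1 p.2
      ⟨x, hx⟩
  have hπ : Function.Surjective π := fun ⟨_, x, hx⟩ ↦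
    ⟨⟨_, A.mem_graph x⟩, Subtype.ext hx⟩
  obtain ⟨C, hC, hbound⟩ := π.exists_preimage_norm_le hπ
  refine ⟨C, hC, fun x ↦ ?_⟩
  obtain ⟨⟨p, hp⟩, hpx, hnorm⟩ := hbound ⟨A x, x, rfl⟩
  obtain ⟨x', hx'p, hAx'p⟩ := A.mem_graph_iff.1 hp
  refine ⟨x', hAx'p.trans (congrArg Subtype.val hpx), ?_⟩
  rw [hx'p]
  exact (norm_fst_le p).trans hnorm

theorem norm_le_norm_of_mem_orthogonal_of_sub_mem {𝕜 E : Type*} [RCLike 𝕜] [NormedAddCommGroup E]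
    [InnerProductSpace 𝕜 E] {K : Submodule 𝕜 E} {x y : E} (hx : x ∈ Kᗮ) (hxy : y - x ∈ K) :
    ‖x‖ ≤ ‖y‖ := by
  have hpyth := norm_add_sq_eq_norm_sq_add_norm_sq_of_inner_eq_zero (𝕜 := 𝕜) x (y - x)
    (Submodule.inner_left_of_mem_orthogonal hxy hx)
  rw [add_sub_cancel] at hpyth
  nlinarith [norm_nonneg x, norm_nonneg y, norm_nonneg (y - x)]

section BoundedBelow

variable {𝕜 E F : Type*} [RCLike 𝕜] [NormedAddCommGroup E] [InnerProductSpace 𝕜 E]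
  [NormedAddCommGroup F] [NormedSpace 𝕜 F]

/-- `A` is bounded below on the orthogonal complement of its kernel, i.e. its reduced minimum
modulus is positive. For closed operators this is the quantitative form of having closed range. -/
def BoundedBelowOffKer (A : E →ₗ.[𝕜] F) : Prop :=
  ∃ C : ℝ, 0 < C ∧ ∀ x : A.domain, (x : E) ∈ (pmapKer A)ᗮ → ‖(x : E)‖ ≤ C * ‖A x‖

variable {A : E →ₗ.[𝕜] F}

theorem exists_mem_orthogonal_pmapKer_apply_eq [(pmapKer A).HasOrthogonalProjection]
    (x : A.domain) : ∃ x' : A.domain, (x' : E) ∈ (pmapKer A)ᗮ ∧ A x' = A x := by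
  obtain ⟨hdom, hA⟩ := exists_apply_eq_of_sub_mem_pmapKer
    (y := x - (pmapKer A).starProjection (x : E)) x (by simp)
  exact ⟨⟨_, hdom⟩, (pmapKer A).sub_starProjection_mem_orthogonal (x : E), hA⟩

variable [CompleteSpace E] [CompleteSpace F]

theorem boundedBelowOffKer_of_isClosed_range (hA : A.IsClosed)
    (hr : IsClosed (A.toFun.range : Set F)) : BoundedBelowOffKer A := by
  obtain ⟨C, hC, hbound⟩ := exists_apply_eq_norm_le_of_isClosed_range hA hr
  refine ⟨C, hC, fun x hx ↦ ?_⟩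
  obtain ⟨x', hAx', hnorm⟩ := hbound x
  have hker : (x' : E) - x ∈ pmapKer A :=
    mem_pmapKer.2 ⟨sub_mem x'.2 x.2, (A.map_sub x' x).trans (sub_eq_zero.2 hAx')⟩
  exact (norm_le_norm_of_mem_orthogonal_of_sub_mem hx hker).trans hnorm

theorem BoundedBelowOffKer.isClosed_range (h : BoundedBelowOffKer A) (hA : A.IsClosed) :
    IsClosed (A.toFun.range : Set F) := by
  obtain ⟨C, hC, hbound⟩ := h
  have : CompleteSpace (pmapKer A) := (isClosed_pmapKer hA).completeSpace_coe
  let G : Submodule 𝕜 (E × F) := A.graph ⊓ (pmapKer A)ᗮ.comap (LinearMap.fst 𝕜 E F)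
  have hG : IsClosed (G : Set (E × F)) :=
    IsClosed.inter hA ((pmapKer A).isClosed_orthogonal.preimage continuous_fst)
  have : CompleteSpace G := hG.completeSpace_coe
  let π : G →L[𝕜] F := (ContinuousLinearMap.snd 𝕜 E F).comp G.subtypeL
  have hπ : AntilipschitzWith (max ⟨C, hC.le⟩ 1) π := by
    refine AddMonoidHomClass.antilipschitz_of_bound π ?_
    rintro ⟨p, hp, hpker⟩
    obtain ⟨x, hxp, hAxp⟩ := A.mem_graph_iff.1 hp
    have hfst : ‖p.1‖ ≤ C * ‖p.2‖ := by
      simpa [hxp, hAxp] using hbound x (by simpa [hxp] using hpker)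
    change max ‖p.1‖ ‖p.2‖ ≤ max C 1 * ‖p.2‖
    rw [max_mul_of_nonneg _ _ (norm_nonneg _), one_mul]
    exact max_le_max_right _ hfst
  have hrange : (A.toFun.range : Set F) = Set.range π := by
    ext z
    constructor
    · rintro ⟨x, rfl⟩
      obtain ⟨x', hx', hAx'⟩ := exists_mem_orthogonal_pmapKer_apply_eq x
      exact ⟨⟨_, A.mem_graph x', hx'⟩, hAx'⟩
    · rintro ⟨⟨p, hp, -⟩, rfl⟩
      obtain ⟨x, -, hAxp⟩ := A.mem_graph_iff.1 hp
      exact ⟨x, hAxp⟩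
  rw [hrange]
  exact hπ.isClosed_range π.uniformContinuous

theorem isClosed_range_iff_boundedBelowOffKer (hA : A.IsClosed) :
    IsClosed (A.toFun.range : Set F) ↔ BoundedBelowOffKer A :=
  ⟨boundedBelowOffKer_of_isClosed_range hA, fun h ↦ h.isClosed_range hA⟩

end BoundedBelow

section Adjoint

variable {𝕜 E F : Type*} [RCLike 𝕜] [NormedAddCommGroup E] [InnerProductSpace 𝕜 E]
  [CompleteSpace E] [NormedAddCommGroup F] [InnerProductSpace 𝕜 F]

theorem pmapKer_adjoint {A : E →ₗ.[𝕜] F} (hd : Dense (A.domain : Set E)) :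
    pmapKer A† = A.toFun.rangeᗮ := by
  ext y
  rw [mem_pmapKer, Submodule.mem_orthogonal']
  constructor
  · rintro ⟨hy, hzero⟩ _ ⟨x, rfl⟩
    have hinner := LinearPMap.adjoint_isFormalAdjoint hd ⟨y, hy⟩ x
    rw [hzero, inner_zero_left] at hinner
    exact hinner.symm
  · intro hy
    have hinner (x : A.domain) : inner 𝕜 (0 : E) (x : E) = inner 𝕜 y (A x) :=
      (inner_zero_left _).trans (hy _ ⟨x, rfl⟩).symm
    exact ⟨LinearPMap.mem_adjoint_domain_of_exists y ⟨0, hinner⟩,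
      LinearPMap.adjoint_apply_eq hd _ hinner⟩

variable [CompleteSpace F]

theorem submodule_adjoint_adjoint_of_isClosed {g : Submodule 𝕜 (E × F)}
    (hg : IsClosed (g : Set (E × F))) : g.adjoint.adjoint = g := by
  let G : Submodule 𝕜 (WithLp 2 (E × F)) := g.comap (WithLp.linearEquiv 2 𝕜 (E × F)).toLinearMap
  have hG : IsClosed (G : Set (WithLp 2 (E × F))) :=
    hg.preimage (WithLp.prod_continuous_ofLp 2 E F)
  have : CompleteSpace G := hG.completeSpace_coe
  apply le_antisymm
  · intro p hp
    suffices WithLp.toLp 2 p ∈ Gᗮᗮ by rwa [Submodule.orthogonal_orthogonal] at this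
    rw [Submodule.mem_adjoint_iff] at hp
    intro q hq
    have hq' : (q.snd, -q.fst) ∈ g.adjoint := by
      rw [Submodule.mem_adjoint_iff]
      intro a b hab
      simpa [WithLp.prod_inner_apply, add_comm] using hq (WithLp.toLp 2 (a, b)) hab
    have hpq := hp _ _ hq'
    simp only [inner_neg_left] at hpq
    change inner 𝕜 q.fst p.1 + inner 𝕜 q.snd p.2 = 0
    linear_combination -hpq
  · rintro ⟨x, z⟩ hxz
    rw [Submodule.mem_adjoint_iff]
    intro a b hab
    have hsub := (Submodule.mem_adjoint_iff g _).1 hab x z hxz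
    rw [← inner_conj_symm b, ← inner_conj_symm a, ← map_sub, ← neg_sub, hsub, neg_zero, map_zero]

variable {A : E →ₗ.[𝕜] F}

theorem dense_adjoint_domain (hd : Dense (A.domain : Set E)) (hA : A.IsClosed) :
    Dense (A†.domain : Set F) := by
  rw [Submodule.dense_iff_topologicalClosure_eq_top, Submodule.topologicalClosure_eq_top_iff,
    Submodule.eq_bot_iff]
  intro z hz
  have hz' : (0, z) ∈ A.graph := by
    rw [← submodule_adjoint_adjoint_of_isClosed hA, Submodule.mem_adjoint_iff,
      ← LinearPMap.adjoint_graph_eq_graph_adjoint hd]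
    intro y w hyw
    simp [Submodule.inner_right_of_mem_orthogonal (LinearPMap.mem_domain_of_mem_graph hyw) hz]
  exact A.graph_fst_eq_zero_snd hz' rfl

theorem adjoint_adjoint_of_isClosed (hd : Dense (A.domain : Set E)) (hA : A.IsClosed) :
    A†† = A := by
  apply LinearPMap.eq_of_eq_graph
  rw [LinearPMap.adjoint_graph_eq_graph_adjoint (dense_adjoint_domain hd hA),
    LinearPMap.adjoint_graph_eq_graph_adjoint hd, submodule_adjoint_adjoint_of_isClosed hA]

theorem isClosed_range_adjoint_of_isClosed_range (hd : Dense (A.domain : Set E)) (hA : A.IsClosed)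
    (hr : IsClosed (A.toFun.range : Set F)) : IsClosed (A†.toFun.range : Set E) := by
  refine BoundedBelowOffKer.isClosed_range ?_ (LinearPMap.adjoint_isClosed hd)
  obtain ⟨C, hC, hbound⟩ := boundedBelowOffKer_of_isClosed_range hA hr
  have : CompleteSpace (pmapKer A) := (isClosed_pmapKer hA).completeSpace_coe
  have : CompleteSpace A.toFun.range := hr.completeSpace_coe
  refine ⟨C, hC, fun y hy ↦ ?_⟩
  rw [pmapKer_adjoint hd, Submodule.orthogonal_orthogonal] at hy
  obtain ⟨x₀, hx₀⟩ := hy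
  obtain ⟨x, hx, hAx⟩ := exists_mem_orthogonal_pmapKer_apply_eq x₀
  replace hAx : A x = y := hAx.trans hx₀
  have hsq : ‖(y : F)‖ * ‖(y : F)‖ ≤ C * ‖A† y‖ * ‖(y : F)‖ := by
    calc ‖(y : F)‖ * ‖(y : F)‖ = ‖inner 𝕜 (y : F) (A x)‖ := by
          rw [hAx, inner_self_eq_norm_sq_to_K]; simp [sq]
      _ = ‖inner 𝕜 (A† y) (x : E)‖ := by rw [LinearPMap.adjoint_isFormalAdjoint hd y x]
      _ ≤ ‖A† y‖ * ‖(x : E)‖ := norm_inner_le_norm _ _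
      _ ≤ ‖A† y‖ * (C * ‖A x‖) := by gcongr; exact hbound x hx
      _ = C * ‖A† y‖ * ‖(y : F)‖ := by rw [hAx]; ring
  rcases (norm_nonneg (y : F)).eq_or_lt with hzero | hpos
  · rw [← hzero]; positivity
  · exact le_of_mul_le_mul_right hsq hpos

theorem isClosed_range_adjoint_iff (hd : Dense (A.domain : Set E)) (hA : A.IsClosed) :
    IsClosed (A†.toFun.range : Set E) ↔ IsClosed (A.toFun.range : Set F) := by
  refine ⟨fun hr ↦ ?_, isClosed_range_adjoint_of_isClosed_range hd hA⟩
  have := isClosed_range_adjoint_of_isClosed_range (dense_adjoint_domain hd hA)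
    (LinearPMap.adjoint_isClosed hd) hr
  rwa [adjoint_adjoint_of_isClosed hd hA] at this

end Adjoint

section JointEstimate

variable {𝕜 E F G : Type*} [RCLike 𝕜] [NormedAddCommGroup E] [InnerProductSpace 𝕜 E]

theorem starProjection_mem_orthogonal_of_mem_orthogonal_inf {K L : Submodule 𝕜 E}
    [K.HasOrthogonalProjection] (hKL : Kᗮ ≤ L) {u : E} (hu : u ∈ (L ⊓ K)ᗮ) :
    K.starProjection u ∈ Lᗮ := by
  intro w hw
  rw [← Submodule.inner_starProjection_left_eq_right]
  have hwL : K.starProjection w ∈ L := by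
    simpa using sub_mem hw (hKL (K.sub_starProjection_mem_orthogonal w))
  exact hu _ ⟨hwL, K.starProjection_apply_mem w⟩

variable [NormedAddCommGroup F] [NormedSpace 𝕜 F] [NormedAddCommGroup G] [NormedSpace 𝕜 G]

/-- Hörmander's `L²` estimate for a pair of operators with common source: on the intersection of
their domains and orthogonally to their common kernel, the norm is controlled by the two images. -/
def HasJointEstimate (A : E →ₗ.[𝕜] F) (B : E →ₗ.[𝕜] G) : Prop :=
  ∃ C : ℝ, 0 < C ∧ ∀ (u : E) (huA : u ∈ A.domain) (huB : u ∈ B.domain),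
    u ∈ (pmapKer A ⊓ pmapKer B)ᗮ → ‖u‖ ^ 2 ≤ C ^ 2 * (‖A ⟨u, huA⟩‖ ^ 2 + ‖B ⟨u, huB⟩‖ ^ 2)

variable {A : E →ₗ.[𝕜] F} {B : E →ₗ.[𝕜] G}

theorem HasJointEstimate.symm (h : HasJointEstimate A B) : HasJointEstimate B A := by
  obtain ⟨C, hC, hbound⟩ := h
  refine ⟨C, hC, fun u huB huA hu ↦ ?_⟩
  rw [add_comm]
  exact hbound u huA huB (inf_comm (pmapKer A) (pmapKer B) ▸ hu)

theorem HasJointEstimate.boundedBelowOffKer_left (h : HasJointEstimate A B)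
    (hAB : (pmapKer A)ᗮ ≤ pmapKer B) : BoundedBelowOffKer A := by
  obtain ⟨C, hC, hbound⟩ := h
  refine ⟨C, hC, fun x hx ↦ ?_⟩
  obtain ⟨hxB, hBx⟩ := mem_pmapKer.1 (hAB hx)
  have hsq := hbound x x.2 hxB (Submodule.orthogonal_le inf_le_left hx)
  rw [hBx, norm_zero, zero_pow two_ne_zero, add_zero, ← mul_pow] at hsq
  exact le_of_sq_le_sq hsq (by positivity)

theorem BoundedBelowOffKer.hasJointEstimate [(pmapKer B).HasOrthogonalProjection]
    (hA : BoundedBelowOffKer A) (hB : BoundedBelowOffKer B) (hBA : (pmapKer B)ᗮ ≤ pmapKer A) :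
    HasJointEstimate A B := by
  obtain ⟨C₁, hC₁, hboundA⟩ := hA
  obtain ⟨C₂, hC₂, hboundB⟩ := hB
  refine ⟨max C₁ C₂, lt_max_of_lt_left hC₁, fun u huA huB hu ↦ ?_⟩
  set p := (pmapKer B)ᗮ.starProjection u
  set q := (pmapKer B).starProjection u
  have hpq : q + p = u := (pmapKer B).starProjection_add_starProjection_orthogonal u
  have hp : p ∈ (pmapKer B)ᗮ := Submodule.starProjection_apply_mem _ u
  have hq_ker : q ∈ pmapKer B := Submodule.starProjection_apply_mem _ u
  have hq : q ∈ (pmapKer A)ᗮ := starProjection_mem_orthogonal_of_mem_orthogonal_inf hBA hu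
  obtain ⟨hqA, hAq⟩ := exists_apply_eq_of_sub_mem_pmapKer (A := A) (y := q) ⟨u, huA⟩
    (by simpa [← hpq] using hBA hp)
  obtain ⟨hpB, hBp⟩ := exists_apply_eq_of_sub_mem_pmapKer (A := B) (y := p) ⟨u, huB⟩
    (by simp [← hpq, hq_ker])
  calc ‖u‖ ^ 2 = ‖q‖ ^ 2 + ‖p‖ ^ 2 := Submodule.norm_sq_eq_add_norm_sq_starProjection u _
    _ ≤ (C₁ * ‖A ⟨u, huA⟩‖) ^ 2 + (C₂ * ‖B ⟨u, huB⟩‖) ^ 2 := by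
      rw [← hAq, ← hBp]
      gcongr
      · exact hboundA ⟨q, hqA⟩ hq
      · exact hboundB ⟨p, hpB⟩ hp
    _ ≤ (max C₁ C₂ * ‖A ⟨u, huA⟩‖) ^ 2 + (max C₁ C₂ * ‖B ⟨u, huB⟩‖) ^ 2 := by
      gcongr
      · exact le_max_left _ _
      · exact le_max_right _ _
    _ = max C₁ C₂ ^ 2 * (‖A ⟨u, huA⟩‖ ^ 2 + ‖B ⟨u, huB⟩‖ ^ 2) := by ring

theorem hasJointEstimate_iff [(pmapKer B).HasOrthogonalProjection]
    (hBA : (pmapKer B)ᗮ ≤ pmapKer A) :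
    HasJointEstimate A B ↔ BoundedBelowOffKer A ∧ BoundedBelowOffKer B := by
  have hAB : (pmapKer A)ᗮ ≤ pmapKer B := by
    simpa only [Submodule.orthogonal_orthogonal] using Submodule.orthogonal_le hBA
  exact ⟨fun h ↦ ⟨h.boundedBelowOffKer_left hAB, h.symm.boundedBelowOffKer_left hBA⟩,
    fun h ↦ h.1.hasJointEstimate h.2 hBA⟩

end JointEstimate

theorem closed_ranges_iff_estimate_general {𝕜 E F G : Type*} [RCLike 𝕜]
    [NormedAddCommGroup E] [InnerProductSpace 𝕜 E] [CompleteSpace E]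
    [NormedAddCommGroup F] [InnerProductSpace 𝕜 F] [CompleteSpace F]
    [NormedAddCommGroup G] [InnerProductSpace 𝕜 G] [CompleteSpace G]
    {T : E →ₗ.[𝕜] F} {S : F →ₗ.[𝕜] G}
    (hT_dense : Dense (T.domain : Set E)) (hT_closed : T.IsClosed)
    (hS_dense : Dense (S.domain : Set F)) (hS_closed : S.IsClosed)
    (hST : T.toFun.range ≤ pmapKer S) :
    IsClosed (T.toFun.range : Set F) ∧ IsClosed (S†.toFun.range : Set F) ↔
      HasJointEstimate S T† := by
  have : CompleteSpace (pmapKer S) := (isClosed_pmapKer hS_closed).completeSpace_coe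
  have hT'_closed : T†.IsClosed := LinearPMap.adjoint_isClosed hT_dense
  have : CompleteSpace (pmapKer T†) := (isClosed_pmapKer hT'_closed).completeSpace_coe
  have hker : (pmapKer T†)ᗮ ≤ pmapKer S := by
    rw [pmapKer_adjoint hT_dense, ← (pmapKer S).orthogonal_orthogonal]
    exact Submodule.orthogonal_le (Submodule.orthogonal_le hST)
  rw [hasJointEstimate_iff hker, ← isClosed_range_iff_boundedBelowOffKer hS_closed,
    ← isClosed_range_iff_boundedBelowOffKer hT'_closed,
    isClosed_range_adjoint_iff hS_dense hS_closed,
    isClosed_range_adjoint_iff hT_dense hT_closed, and_comm]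

/-- Hörmander's Lemma 7.2, first part: for closed densely defined operators `T : H₁ → H₂` and
`S : H₂ → H₃` with `Range T ⊆ Ker S` and `H := Ker S ∩ Ker T*`, the ranges of `T` and of `S*`
are both closed iff there is `C > 0` with `‖u‖² ≤ C²(‖Su‖² + ‖T*u‖²)` for every
`u ∈ Dom S ∩ Dom T*` orthogonal to `H`. -/
theorem closed_ranges_iff_estimate
    {H₁ H₂ H₃ : Type*} [NormedAddCommGroup H₁] [InnerProductSpace ℂ H₁] [CompleteSpace H₁]
    [NormedAddCommGroup H₂] [InnerProductSpace ℂ H₂] [CompleteSpace H₂]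
    [NormedAddCommGroup H₃] [InnerProductSpace ℂ H₃] [CompleteSpace H₃]
    (T : H₁ →ₗ.[ℂ] H₂) (S : H₂ →ₗ.[ℂ] H₃)
    (hT_dense : Dense (T.domain : Set H₁)) (hT_closed : T.IsClosed)
    (hS_dense : Dense (S.domain : Set H₂)) (hS_closed : S.IsClosed)
    (hST : LinearMap.range T.toFun ≤ (LinearMap.ker S.toFun).map S.domain.subtype)
    (H : Submodule ℂ H₂)
    (hH : H = ((LinearMap.ker S.toFun).map S.domain.subtype) ⊓
        ((LinearMap.ker T.adjoint.toFun).map T.adjoint.domain.subtype)) :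
    (IsClosed ((LinearMap.range T.toFun : Submodule ℂ H₂) : Set H₂) ∧
        IsClosed ((LinearMap.range S.adjoint.toFun : Submodule ℂ H₂) : Set H₂)) ↔
      ∃ C : ℝ, 0 < C ∧ ∀ (u : H₂) (huS : u ∈ S.domain) (huT : u ∈ T.adjoint.domain),
        u ∈ Hᗮ →
          ‖u‖ ^ 2 ≤ C ^ 2 * (‖S ⟨u, huS⟩‖ ^ 2 + ‖T.adjoint ⟨u, huT⟩‖ ^ 2) := by
  subst hH
  exact closed_ranges_iff_estimate_general hT_dense hT_closed hS_dense hS_closed hST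
end

section
/- Let H₁, H₂, H₃ be complex Hilbert spaces, let T : H₁ → H₂ and S : H₂ → H₃ be closed, densely defined linear operators with Range T ⊆ Ker S. Then there exists a constant C > 0 such that ‖u‖² ≤ C²(‖Su‖² + ‖T*u‖²) for every u ∈ Dom S ∩ Dom T* if and only if Range S* = Ker T* and Range T = Ker S. -/
/-!
The estimate decouples along `Ker S ⊕ (Ker S)ᗮ`: since `S` vanishes on the first summand and `T†` on
the second, it says that `T†` is bounded below on `Ker S` and `S` is bounded below on `(Ker S)ᗮ`.
A quantitative form of the closed range theorem (Riesz representation in one direction, uniform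
boundedness in the other) turns these into `Ker S ≤ Range T†† = Range T` and
`(Ker S)ᗮ ≤ Range S†`, and `Range T = Ker S` gives `(Ker S)ᗮ = (Range T)ᗮ = Ker T†`.
-/

section

open scoped LinearPMap InnerProductSpace

section Kernel

variable {R E F : Type*} [Ring R] [AddCommGroup E] [Module R E] [AddCommGroup F] [Module R F]

/-- The kernel of a partially defined operator, as a submodule of the whole space rather than of
the domain. -/
def ambientKer (P : E →ₗ.[R] F) : Submodule R E :=
  (LinearMap.ker P.toFun).map P.domain.subtype

theorem mem_ambientKer {P : E →ₗ.[R] F} {u : E} :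
    u ∈ ambientKer P ↔ ∃ hu : u ∈ P.domain, P ⟨u, hu⟩ = 0 := by
  constructor
  · rintro ⟨⟨u, hu⟩, hPu, rfl⟩
    exact ⟨hu, hPu⟩
  · rintro ⟨hu, hPu⟩
    exact ⟨⟨u, hu⟩, hPu, rfl⟩

theorem mem_ambientKer_iff_mem_graph {P : E →ₗ.[R] F} {u : E} :
    u ∈ ambientKer P ↔ (u, 0) ∈ P.graph := by
  simp only [mem_ambientKer, LinearPMap.mem_graph_iff, Subtype.exists, exists_and_left,
    exists_eq_left]

theorem exists_apply_eq_of_sub_mem_ambientKer {P : E →ₗ.[R] F} {a : E} (u : P.domain)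
    (h : (u : E) - a ∈ ambientKer P) : ∃ ha : a ∈ P.domain, P ⟨a, ha⟩ = P u := by
  have h_graph : (a, P u) ∈ P.graph := by
    simpa using P.graph.sub_mem (P.mem_graph u) (mem_ambientKer_iff_mem_graph.1 h)
  obtain ⟨⟨a, ha⟩, rfl, hPa⟩ := (LinearPMap.mem_graph_iff P).1 h_graph
  exact ⟨ha, hPa⟩

theorem isClosed_ambientKer {R E F : Type*} [CommRing R]
    [AddCommGroup E] [Module R E] [TopologicalSpace E]
    [AddCommGroup F] [Module R F] [TopologicalSpace F] {P : E →ₗ.[R] F} (hP : P.IsClosed) :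
    IsClosed (ambientKer P : Set E) := by
  have h_preimage : (ambientKer P : Set E) = (fun u ↦ (u, (0 : F))) ⁻¹' P.graph :=
    Set.ext fun _ ↦ mem_ambientKer_iff_mem_graph
  rw [h_preimage]
  exact hP.preimage (by fun_prop)

end Kernel

section BoundedBelow

variable {R E F G : Type*} [Ring R] [SeminormedAddCommGroup E] [Module R E]
  [SeminormedAddCommGroup F] [Module R F] [SeminormedAddCommGroup G] [Module R G]

/-- The a priori estimate `‖u‖ ≤ C ‖P u‖` for those vectors of `K` that lie in the domain
of `P`. -/
def BoundedBelowOn (P : E →ₗ.[R] F) (K : Submodule R E) : Prop :=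
  ∃ C : ℝ, ∀ u : P.domain, (u : E) ∈ K → ‖(u : E)‖ ≤ C * ‖P u‖

theorem boundedBelowOn_of_sq_norm_le {P : E →ₗ.[R] F} {Q : E →ₗ.[R] G} {K : Submodule R E} {C : ℝ}
    (hC : 0 ≤ C) (hK : K ≤ ambientKer Q)
    (h : ∀ (u : E) (huP : u ∈ P.domain) (huQ : u ∈ Q.domain),
      ‖u‖ ^ 2 ≤ C ^ 2 * (‖P ⟨u, huP⟩‖ ^ 2 + ‖Q ⟨u, huQ⟩‖ ^ 2)) :
    BoundedBelowOn P K := by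
  refine ⟨C, fun u hu ↦ ?_⟩
  obtain ⟨huQ, hQu⟩ := mem_ambientKer.1 (hK hu)
  refine le_of_sq_le_sq ?_ (by positivity)
  simpa [hQu, mul_pow] using h u u.2 huQ

end BoundedBelow

section Projection

variable {𝕜 E F G : Type*} [RCLike 𝕜] [NormedAddCommGroup E] [InnerProductSpace 𝕜 E]
  [SeminormedAddCommGroup F] [Module 𝕜 F] [SeminormedAddCommGroup G] [Module 𝕜 G]
  {P : E →ₗ.[𝕜] F} {Q : E →ₗ.[𝕜] G} {K : Submodule 𝕜 E}

theorem BoundedBelowOn.exists_norm_starProjection_le [K.HasOrthogonalProjection]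
    (h : BoundedBelowOn P K) (hK : Kᗮ ≤ ambientKer P) :
    ∃ C : ℝ, ∀ u : P.domain, ‖K.starProjection u‖ ≤ C * ‖P u‖ := by
  obtain ⟨C, hC⟩ := h
  refine ⟨C, fun u ↦ ?_⟩
  obtain ⟨h_dom, h_apply⟩ := exists_apply_eq_of_sub_mem_ambientKer u
    (hK (K.sub_starProjection_mem_orthogonal u))
  rw [← h_apply]
  exact hC ⟨_, h_dom⟩ (K.starProjection_apply_mem u)

theorem exists_sq_norm_le_iff_boundedBelowOn [K.HasOrthogonalProjection] (hKP : K ≤ ambientKer P)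
    (hKQ : Kᗮ ≤ ambientKer Q) :
    (∃ C : ℝ, 0 < C ∧ ∀ (u : E) (huP : u ∈ P.domain) (huQ : u ∈ Q.domain),
        ‖u‖ ^ 2 ≤ C ^ 2 * (‖P ⟨u, huP⟩‖ ^ 2 + ‖Q ⟨u, huQ⟩‖ ^ 2)) ↔
      BoundedBelowOn P Kᗮ ∧ BoundedBelowOn Q K := by
  constructor
  · rintro ⟨C, hC, h⟩
    exact ⟨boundedBelowOn_of_sq_norm_le hC.le hKQ h,
      boundedBelowOn_of_sq_norm_le hC.le hKP fun u huQ huP ↦ by simpa [add_comm] using h u huP huQ⟩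
  · rintro ⟨hP, hQ⟩
    obtain ⟨A, hA⟩ := hP.exists_norm_starProjection_le (by rwa [K.orthogonal_orthogonal])
    obtain ⟨B, hB⟩ := hQ.exists_norm_starProjection_le hKQ
    refine ⟨|A| + |B| + 1, by positivity, fun u huP huQ ↦ ?_⟩
    have hA_le : A ≤ |A| + |B| + 1 := by linarith [le_abs_self A, abs_nonneg B]
    have hB_le : B ≤ |A| + |B| + 1 := by linarith [le_abs_self B, abs_nonneg A]
    calc ‖u‖ ^ 2 = ‖Kᗮ.starProjection u‖ ^ 2 + ‖K.starProjection u‖ ^ 2 := by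
          rw [add_comm]
          exact K.norm_sq_eq_add_norm_sq_starProjection u
      _ ≤ ((|A| + |B| + 1) * ‖P ⟨u, huP⟩‖) ^ 2 + ((|A| + |B| + 1) * ‖Q ⟨u, huQ⟩‖) ^ 2 := by
          gcongr
          · exact (hA ⟨u, huP⟩).trans (by gcongr)
          · exact (hB ⟨u, huQ⟩).trans (by gcongr)
      _ = (|A| + |B| + 1) ^ 2 * (‖P ⟨u, huP⟩‖ ^ 2 + ‖Q ⟨u, huQ⟩‖ ^ 2) := by ring

end Projection

variable {𝕜 E F G : Type*} [RCLike 𝕜]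
  [NormedAddCommGroup E] [InnerProductSpace 𝕜 E]
  [NormedAddCommGroup F] [InnerProductSpace 𝕜 F]
  [NormedAddCommGroup G] [InnerProductSpace 𝕜 G]

section Adjoint

theorem submodule_adjoint_adjoint [CompleteSpace E] [CompleteSpace F] {g : Submodule 𝕜 (E × F)}
    (hg : IsClosed (g : Set (E × F))) : g.adjoint.adjoint = g := by
  ext x
  constructor
  · intro hx
    let gL2 : Submodule 𝕜 (WithLp 2 (E × F)) :=
      g.comap (WithLp.linearEquiv 2 𝕜 (E × F)).toLinearMap
    have : CompleteSpace gL2 :=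
      (hg.preimage (WithLp.prod_continuous_ofLp 2 E F)).completeSpace_coe
    suffices WithLp.toLp 2 x ∈ gL2ᗮᗮ by rwa [Submodule.orthogonal_orthogonal] at this
    rw [Submodule.mem_orthogonal]
    intro y hy
    have hy_adjoint : (y.snd, -y.fst) ∈ g.adjoint := by
      rw [Submodule.mem_adjoint_iff]
      intro a b hab
      simpa [WithLp.prod_inner_apply, add_comm] using
        (Submodule.mem_orthogonal _ _).1 hy (WithLp.toLp 2 (a, b)) hab
    have h_inner := (Submodule.mem_adjoint_iff _ _).1 hx _ _ hy_adjoint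
    rw [inner_neg_left, ← neg_add', neg_eq_zero] at h_inner
    exact h_inner
  · rw [Submodule.mem_adjoint_iff]
    intro hx a b hab
    have h_inner := (Submodule.mem_adjoint_iff _ _).1 hab _ _ hx
    rw [← inner_conj_symm b, ← inner_conj_symm a, ← map_sub, ← neg_sub, h_inner, neg_zero, map_zero]

variable [CompleteSpace E] {P : E →ₗ.[𝕜] F}

theorem mem_graph_adjoint_iff (hP : Dense (P.domain : Set E)) {v : F} {f : E} :
    (v, f) ∈ P†.graph ↔ ∀ u : P.domain, ⟪f, u⟫_𝕜 = ⟪v, P u⟫_𝕜 := by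
  rw [LinearPMap.mem_graph_iff]
  constructor
  · rintro ⟨v, rfl, rfl⟩ u
    exact LinearPMap.adjoint_isFormalAdjoint hP v u
  · intro h
    exact ⟨⟨v, LinearPMap.mem_adjoint_domain_of_exists v ⟨f, h⟩⟩, rfl,
      LinearPMap.adjoint_apply_eq hP _ h⟩

theorem ambientKer_adjoint (hP : Dense (P.domain : Set E)) :
    ambientKer P† = (LinearMap.range P.toFun)ᗮ := by
  ext v
  rw [mem_ambientKer_iff_mem_graph, mem_graph_adjoint_iff hP, Submodule.mem_orthogonal']
  simp only [inner_zero_left, eq_comm (a := (0 : 𝕜)), LinearMap.mem_range, forall_exists_index,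
    forall_apply_eq_imp_iff, LinearPMap.toFun_eq_coe]

theorem range_adjoint_le_orthogonal_ambientKer (hP : Dense (P.domain : Set E)) :
    LinearMap.range P†.toFun ≤ (ambientKer P)ᗮ := by
  rintro _ ⟨v, rfl⟩
  rw [Submodule.mem_orthogonal']
  intro u hu
  obtain ⟨hu, hPu⟩ := mem_ambientKer.1 hu
  calc ⟪P† v, u⟫_𝕜 = ⟪(v : F), P ⟨u, hu⟩⟫_𝕜 := LinearPMap.adjoint_isFormalAdjoint hP v ⟨u, hu⟩
    _ = 0 := by rw [hPu, inner_zero_right]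

theorem mem_range_adjoint_of_norm_inner_le [CompleteSpace F] (hP : Dense (P.domain : Set E))
    {f : E} {C : ℝ} (h : ∀ u : P.domain, ‖⟪f, u⟫_𝕜‖ ≤ C * ‖P u‖) :
    f ∈ LinearMap.range P†.toFun := by
  let φ : Module.Dual 𝕜 P.domain := (innerₛₗ 𝕜 f).comp P.domain.subtype
  have hφ : φ ∈ LinearMap.range P.toFun.dualMap := by
    rw [LinearMap.range_dualMap_eq_dualAnnihilator_ker, Submodule.mem_dualAnnihilator]
    intro u hu
    have hPu : P u = 0 := hu
    simpa [φ, hPu] using h u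
  obtain ⟨ψ, hψ⟩ := hφ
  have hψ_apply (u : P.domain) : ψ (P u) = ⟪f, u⟫_𝕜 := LinearMap.congr_fun hψ u
  let ψ_range : StrongDual 𝕜 (LinearMap.range P.toFun) :=
    (ψ.domRestrict _).mkContinuous C <| by
      rintro ⟨_, u, rfl⟩
      simpa [hψ_apply] using h u
  obtain ⟨Ψ, hΨ, -⟩ := exists_extension_norm_eq _ ψ_range
  suffices h_graph : ((InnerProductSpace.toDual 𝕜 F).symm Ψ, f) ∈ P†.graph from
    Set.mem_range.1 (LinearPMap.mem_range_iff.2 ⟨_, h_graph⟩)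
  rw [mem_graph_adjoint_iff hP]
  intro u
  rw [InnerProductSpace.toDual_symm_apply, ← hψ_apply]
  exact (hΨ ⟨P u, u, rfl⟩).symm

variable [CompleteSpace F]

theorem dense_adjoint_domain_s5 (hP : Dense (P.domain : Set E)) (hP_closed : P.IsClosed) :
    Dense (P†.domain : Set F) := by
  rw [Submodule.dense_iff_topologicalClosure_eq_top, Submodule.topologicalClosure_eq_top_iff,
    Submodule.eq_bot_iff]
  intro y hy
  have h_graph : (0, y) ∈ P.graph := by
    rw [← submodule_adjoint_adjoint hP_closed, ← LinearPMap.adjoint_graph_eq_graph_adjoint hP,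
      Submodule.mem_adjoint_iff]
    intro a b hab
    simpa using (Submodule.mem_orthogonal _ _).1 hy a (LinearPMap.mem_domain_of_mem_graph hab)
  exact P.graph_fst_eq_zero_snd h_graph rfl

theorem adjoint_adjoint_of_isClosed_s5 (hP : Dense (P.domain : Set E)) (hP_closed : P.IsClosed) :
    P†† = P := by
  apply LinearPMap.eq_of_eq_graph
  rw [LinearPMap.adjoint_graph_eq_graph_adjoint (dense_adjoint_domain_s5 hP hP_closed),
    LinearPMap.adjoint_graph_eq_graph_adjoint hP, submodule_adjoint_adjoint hP_closed]

end Adjoint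

section ClosedRange

variable {P : E →ₗ.[𝕜] F} {K : Submodule 𝕜 E}

theorem BoundedBelowOn.le_range_adjoint [CompleteSpace E] [CompleteSpace F]
    [K.HasOrthogonalProjection] (h : BoundedBelowOn P K) (hP : Dense (P.domain : Set E))
    (hK : Kᗮ ≤ ambientKer P) : K ≤ LinearMap.range P†.toFun := by
  obtain ⟨C, hC⟩ := h.exists_norm_starProjection_le hK
  intro f hf
  refine mem_range_adjoint_of_norm_inner_le hP (C := ‖f‖ * C) fun u ↦ ?_
  calc ‖⟪f, u⟫_𝕜‖ = ‖⟪f, K.starProjection u⟫_𝕜‖ := by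
        rw [← K.inner_starProjection_left_eq_right, K.starProjection_eq_self_iff.2 hf]
    _ ≤ ‖f‖ * ‖K.starProjection u‖ := norm_inner_le_norm _ _
    _ ≤ ‖f‖ * C * ‖P u‖ := by
        rw [mul_assoc]
        gcongr
        exact hC u

theorem boundedBelowOn_of_le_range_adjoint [CompleteSpace E] [CompleteSpace K]
    (hP : Dense (P.domain : Set E)) (hK : K ≤ LinearMap.range P†.toFun) :
    BoundedBelowOn P K := by
  -- Where `P u = 0` the scalar `‖P u‖⁻¹` is `0`, so `φ` only controls `u` when `P u ≠ 0`.
  let φ (u : {u : P.domain // (u : E) ∈ K}) : StrongDual 𝕜 K :=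
    innerSL 𝕜 (((‖P u‖⁻¹ : ℝ) : 𝕜) • (⟨u, u.2⟩ : K))
  have h_inner (u : P.domain) (v : P†.domain) : ⟪(u : E), P† v⟫_𝕜 = ⟪P u, v⟫_𝕜 :=
    ((LinearPMap.adjoint_isFormalAdjoint hP).symm u v).symm
  have h_pointwise (w : K) : ∃ C, ∀ u, ‖φ u w‖ ≤ C := by
    obtain ⟨v, hv⟩ := hK w.2
    refine ⟨‖(v : F)‖, fun u ↦ ?_⟩
    calc ‖φ u w‖ = ‖P u‖⁻¹ * ‖⟪P u, v⟫_𝕜‖ := by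
          rw [← h_inner]
          simp [φ, inner_smul_left, ← hv]
      _ ≤ ‖P u‖⁻¹ * (‖P u‖ * ‖(v : F)‖) := by gcongr; exact norm_inner_le_norm _ _
      _ ≤ ‖(v : F)‖ := inv_mul_le_of_le_mul₀ (norm_nonneg _) (norm_nonneg _) le_rfl
  obtain ⟨C, hC⟩ := banach_steinhaus h_pointwise
  refine ⟨C, fun u hu ↦ ?_⟩
  rcases eq_or_ne (P u) 0 with hPu | hPu
  · obtain ⟨v, hv⟩ := hK hu
    have h_zero : ⟪(u : E), u⟫_𝕜 = 0 := by
      nth_rw 2 [← hv]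
      exact (h_inner u v).trans (by rw [hPu, inner_zero_left])
    rw [inner_self_eq_zero.1 h_zero, hPu, norm_zero, norm_zero, mul_zero]
  · have h_norm := hC ⟨u, hu⟩
    simp only [φ, innerSL_apply_norm, norm_smul, RCLike.norm_ofReal, abs_inv, abs_norm] at h_norm
    rwa [inv_mul_le_iff₀ (norm_pos_iff.2 hPu), mul_comm] at h_norm

theorem boundedBelowOn_iff_le_range_adjoint [CompleteSpace E] [CompleteSpace F] [CompleteSpace K]
    (hP : Dense (P.domain : Set E)) (hK : Kᗮ ≤ ambientKer P) :
    BoundedBelowOn P K ↔ K ≤ LinearMap.range P†.toFun :=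
  ⟨fun h ↦ h.le_range_adjoint hP hK, boundedBelowOn_of_le_range_adjoint hP⟩

end ClosedRange

theorem range_adjoint_eq_ambientKer_and_range_eq_iff [CompleteSpace E] [CompleteSpace F]
    {T : E →ₗ.[𝕜] F} {S : F →ₗ.[𝕜] G} (hT : Dense (T.domain : Set E))
    (hS : Dense (S.domain : Set F)) (hST : LinearMap.range T.toFun ≤ ambientKer S) :
    (LinearMap.range S†.toFun = ambientKer T† ∧ LinearMap.range T.toFun = ambientKer S) ↔
      (ambientKer S)ᗮ ≤ LinearMap.range S†.toFun ∧ ambientKer S ≤ LinearMap.range T.toFun := by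
  rw [ambientKer_adjoint hT, hST.ge_iff_eq, and_congr_left_iff]
  intro h_range
  rw [h_range, (range_adjoint_le_orthogonal_ambientKer hS).ge_iff_eq]

theorem estimate_iff_range_eq_ker_general
    [CompleteSpace E] [CompleteSpace F] [CompleteSpace G] (T : E →ₗ.[𝕜] F) (S : F →ₗ.[𝕜] G)
    (hT_dense : Dense (T.domain : Set E)) (hT_closed : T.IsClosed)
    (hS_dense : Dense (S.domain : Set F)) (hS_closed : S.IsClosed)
    (hST : LinearMap.range T.toFun ≤ ambientKer S) :
    (∃ C : ℝ, 0 < C ∧ ∀ (u : F) (huS : u ∈ S.domain) (huT : u ∈ T†.domain),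
        ‖u‖ ^ 2 ≤ C ^ 2 * (‖S ⟨u, huS⟩‖ ^ 2 + ‖T† ⟨u, huT⟩‖ ^ 2)) ↔
      (LinearMap.range S†.toFun = ambientKer T† ∧ LinearMap.range T.toFun = ambientKer S) := by
  have : CompleteSpace (ambientKer S) := (isClosed_ambientKer hS_closed).completeSpace_coe
  have h_orthogonal : (ambientKer S)ᗮ ≤ ambientKer T† := by
    rw [ambientKer_adjoint hT_dense]
    exact Submodule.orthogonal_le hST
  rw [exists_sq_norm_le_iff_boundedBelowOn le_rfl h_orthogonal,
    boundedBelowOn_iff_le_range_adjoint hS_dense (ambientKer S).orthogonal_orthogonal.le,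
    boundedBelowOn_iff_le_range_adjoint (dense_adjoint_domain_s5 hT_dense hT_closed) h_orthogonal,
    adjoint_adjoint_of_isClosed_s5 hT_dense hT_closed,
    range_adjoint_eq_ambientKer_and_range_eq_iff hT_dense hS_dense hST]

end

/-- Hörmander's Lemma 7.2, second part: for closed densely defined operators `T : H₁ → H₂` and
`S : H₂ → H₃` with `Range T ⊆ Ker S`, there is `C > 0` with
`‖u‖² ≤ C²(‖Su‖² + ‖T*u‖²)` for every `u ∈ Dom S ∩ Dom T*` iff
`Range S* = Ker T*` and `Range T = Ker S`. -/
theorem estimate_iff_range_eq_ker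
    {H₁ H₂ H₃ : Type*} [NormedAddCommGroup H₁] [InnerProductSpace ℂ H₁] [CompleteSpace H₁]
    [NormedAddCommGroup H₂] [InnerProductSpace ℂ H₂] [CompleteSpace H₂]
    [NormedAddCommGroup H₃] [InnerProductSpace ℂ H₃] [CompleteSpace H₃]
    (T : H₁ →ₗ.[ℂ] H₂) (S : H₂ →ₗ.[ℂ] H₃)
    (hT_dense : Dense (T.domain : Set H₁)) (hT_closed : T.IsClosed)
    (hS_dense : Dense (S.domain : Set H₂)) (hS_closed : S.IsClosed)
    (hST : LinearMap.range T.toFun ≤ (LinearMap.ker S.toFun).map S.domain.subtype) :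
    (∃ C : ℝ, 0 < C ∧ ∀ (u : H₂) (huS : u ∈ S.domain) (huT : u ∈ T.adjoint.domain),
        ‖u‖ ^ 2 ≤ C ^ 2 * (‖S ⟨u, huS⟩‖ ^ 2 + ‖T.adjoint ⟨u, huT⟩‖ ^ 2)) ↔
      (LinearMap.range S.adjoint.toFun =
          (LinearMap.ker T.adjoint.toFun).map T.adjoint.domain.subtype ∧
        LinearMap.range T.toFun = (LinearMap.ker S.toFun).map S.domain.subtype) :=
  estimate_iff_range_eq_ker_general T S hT_dense hT_closed hS_dense hS_closed hST
end
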